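/- The formula (∀x,y)(Sx = Sy → □(x = y)) is provable in CC″. -/

import Mathlib

/-!
Deep embedding of CC″: Weaver's system CC ("Constructive Concepts")
extended by definitions with a constant 0, a unary function symbol S and a
constant ω, satisfying
  r ∈ 0 ↔ □⊥,
  r ∈ Sx ↔ □(r = x),
  r ∈ ω ↔ □(∀z)[(0 ∈ z ∧ (∀x)(x ∈ z → Sx ∈ z)) → r ∈ z].

The language is the first-order language of set theory (∈ and =) with the
extra function symbols, augmented by a unary operator □.  Variables are de
Bruijn indices.  ⊥ is the defined formula (∀x,y)(x ∈ y) and ¬A abbreviates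
A → ⊥.  CC consists of intuitionistic predicate calculus with equality,
the modal axiom schemes (1)–(6), the deduction rule inferring A from □A
(for theorems), extensionality, and the comprehension scheme
(∃x)(∀r)(r ∈ x ↔ □A) with x not free in A.
-/

namespace CC2

/-- Terms of CC″: variables (de Bruijn indices), 0, S, ω. -/
inductive Tm : Type
  | var : ℕ → Tm
  | zero : Tm
  | succ : Tm → Tm
  | omega : Tm
  deriving DecidableEq

/-- Formulas of CC″. -/
inductive Fm : Type
  | mem : Tm → Tm → Fm      -- s ∈ t
  | eq  : Tm → Tm → Fm      -- s = t
  | and : Fm → Fm → Fm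
  | or  : Fm → Fm → Fm
  | imp : Fm → Fm → Fm
  | all : Fm → Fm
  | ex  : Fm → Fm
  | box : Fm → Fm
  deriving DecidableEq

namespace Tm

/-- Lift a term at depth d: free indices ≥ d are incremented. -/
def liftAt (d : ℕ) : Tm → Tm
  | var n => var (if n < d then n else n + 1)
  | zero => zero
  | succ t => succ (t.liftAt d)
  | omega => omega

/-- Substitute the term s for the de Bruijn index d. -/
def subst (d : ℕ) (s : Tm) : Tm → Tm
  | var n => if n < d then var n else if n = d then s else var (n - 1)
  | zero => zero
  | succ t => succ (subst d s t)
  | omega => omega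

end Tm

namespace Fm

/-- ⊥ stands for (∀x,y)(x ∈ y). -/
def bot : Fm := .all (.all (.mem (.var 1) (.var 0)))

/-- ¬A abbreviates A → ⊥. -/
def neg (A : Fm) : Fm := A.imp bot

/-- A ↔ B abbreviates (A → B) ∧ (B → A). -/
def iff (A B : Fm) : Fm := (A.imp B).and (B.imp A)

/-- Lift a formula at depth d: free indices ≥ d are incremented. -/
def liftAt (d : ℕ) : Fm → Fm
  | mem a b => mem (a.liftAt d) (b.liftAt d)
  | eq a b  => eq (a.liftAt d) (b.liftAt d)
  | and A B => and (A.liftAt d) (B.liftAt d)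
  | or A B  => or (A.liftAt d) (B.liftAt d)
  | imp A B => imp (A.liftAt d) (B.liftAt d)
  | all A   => all (A.liftAt (d+1))
  | ex A    => ex (A.liftAt (d+1))
  | box A   => box (A.liftAt d)

/-- Lift a formula (all free indices incremented). -/
def shift : Fm → Fm := liftAt 0

/-- Substitute the term s for the de Bruijn index d. -/
def subst (d : ℕ) (s : Tm) : Fm → Fm
  | mem a b => mem (Tm.subst d s a) (Tm.subst d s b)
  | eq a b  => eq (Tm.subst d s a) (Tm.subst d s b)
  | and A B => and (A.subst d s) (B.subst d s)
  | or A B  => or (A.subst d s) (B.subst d s)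
  | imp A B => imp (A.subst d s) (B.subst d s)
  | all A   => all (A.subst (d+1) (s.liftAt 0))
  | ex A    => ex (A.subst (d+1) (s.liftAt 0))
  | box A   => box (A.subst d s)

end Fm

/-- The extensionality axiom (7): x = y ↔ (∀u)(u ∈ x ↔ u ∈ y)
(universally closed). -/
def extAx : Fm :=
  .all (.all (Fm.iff (.eq (.var 1) (.var 0))
    (.all (Fm.iff (.mem (.var 0) (.var 2)) (.mem (.var 0) (.var 1))))))

/-- Defining axiom of 0:  (∀r)(r ∈ 0 ↔ □⊥). -/
def zeroAx : Fm := .all (Fm.iff (.mem (.var 0) .zero) (.box Fm.bot))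

/-- Defining axiom of S:  (∀r,x)(r ∈ Sx ↔ □(r = x)). -/
def succAx : Fm :=
  .all (.all (Fm.iff (.mem (.var 1) (.succ (.var 0)))
    (.box (.eq (.var 1) (.var 0)))))

/-- Defining axiom of ω:
(∀r)(r ∈ ω ↔ □(∀z)[(0 ∈ z ∧ (∀x)(x ∈ z → Sx ∈ z)) → r ∈ z]). -/
def omegaAx : Fm :=
  .all (Fm.iff (.mem (.var 0) .omega)
    (.box (.all (.imp
      (.and (.mem .zero (.var 0))
        (.all (.imp (.mem (.var 0) (.var 1))
          (.mem (.succ (.var 0)) (.var 1)))))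
      (.mem (.var 1) (.var 0))))))

/-- Derivability in CC″ from a list of hypotheses: intuitionistic natural
deduction with equality (with ex falso for the defined ⊥), the modal axioms
(1)–(6), the rule inferring A from □A (for theorems), extensionality, the
comprehension scheme, and the defining axioms of 0, S, ω.  In `compr` the
formula A has de Bruijn index 0 as the fixed variable r; lifting at 1
guarantees that the comprehension variable x does not occur freely in A. -/
inductive Prf : List Fm → Fm → Prop
  | hyp {Γ : List Fm} {A : Fm} : A ∈ Γ → Prf Γ A
  | andI {Γ : List Fm} {A B : Fm} : Prf Γ A → Prf Γ B → Prf Γ (.and A B)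
  | andE1 {Γ : List Fm} {A B : Fm} : Prf Γ (.and A B) → Prf Γ A
  | andE2 {Γ : List Fm} {A B : Fm} : Prf Γ (.and A B) → Prf Γ B
  | orI1 {Γ : List Fm} {A B : Fm} : Prf Γ A → Prf Γ (.or A B)
  | orI2 {Γ : List Fm} {A B : Fm} : Prf Γ B → Prf Γ (.or A B)
  | orE {Γ : List Fm} {A B C : Fm} :
      Prf Γ (.or A B) → Prf (A :: Γ) C → Prf (B :: Γ) C → Prf Γ C
  | impI {Γ : List Fm} {A B : Fm} : Prf (A :: Γ) B → Prf Γ (.imp A B)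
  | impE {Γ : List Fm} {A B : Fm} : Prf Γ (.imp A B) → Prf Γ A → Prf Γ B
  | exfalso {Γ : List Fm} {A : Fm} : Prf Γ Fm.bot → Prf Γ A
  | allI {Γ : List Fm} {A : Fm} : Prf (Γ.map Fm.shift) A → Prf Γ (.all A)
  | allE {Γ : List Fm} {A : Fm} (t : Tm) : Prf Γ (.all A) → Prf Γ (A.subst 0 t)
  | exI {Γ : List Fm} {A : Fm} (t : Tm) : Prf Γ (A.subst 0 t) → Prf Γ (.ex A)
  | exE {Γ : List Fm} {A B : Fm} :
      Prf Γ (.ex A) → Prf (A :: Γ.map Fm.shift) B.shift → Prf Γ B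
  | refl {Γ : List Fm} (t : Tm) : Prf Γ (.eq t t)
  | eqSubst {Γ : List Fm} {A : Fm} (s t : Tm) :
      Prf Γ (.eq s t) → Prf Γ (A.subst 0 s) → Prf Γ (A.subst 0 t)
  | ax1 {Γ : List Fm} {A : Fm} : Prf Γ (A.imp (.box A))
  | ax2 {Γ : List Fm} {A B : Fm} :
      Prf Γ (Fm.iff (.box (.and A B)) (.and (.box A) (.box B)))
  | ax3 {Γ : List Fm} {A B : Fm} :
      Prf Γ (Fm.iff (.box (.or A B)) (.or (.box A) (.box B)))
  | ax4 {Γ : List Fm} {A : Fm} : Prf Γ (Fm.iff (.box (.ex A)) (.ex (.box A)))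
  | ax5 {Γ : List Fm} {A : Fm} : Prf Γ (Fm.iff (.box (.all A)) (.all (.box A)))
  | ax6 {Γ : List Fm} {A B : Fm} :
      Prf Γ ((Fm.box (A.imp B)).imp ((Fm.box A).imp (.box B)))
  | boxE {A : Fm} : Prf [] (.box A) → Prf [] A
  | ext {Γ : List Fm} : Prf Γ extAx
  | compr {Γ : List Fm} (A : Fm) :
      Prf Γ (.ex (.all (Fm.iff (.mem (.var 0) (.var 1)) (.box (A.liftAt 1)))))
  | ax0 {Γ : List Fm} : Prf Γ zeroAx
  | axS {Γ : List Fm} : Prf Γ succAx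
  | axW {Γ : List Fm} : Prf Γ omegaAx

end CC2

namespace CC2
/-- The defining axiom of `S` at variables: `v ∈ Sw ↔ □(v = w)`. -/
theorem mem_succ_iff (Γ : List Fm) (m n : ℕ) :
    Prf Γ (Fm.iff (.mem (.var m) (.succ (.var n))) (.box (.eq (.var m) (.var n)))) :=
  (Prf.axS.allE (.var m)).allE (.var n)

/-- Every variable is a member of its successor. -/
theorem self_mem_succ (Γ : List Fm) (n : ℕ) :
    Prf Γ (.mem (.var n) (.succ (.var n))) :=
  (mem_succ_iff Γ n n).andE2.impE (Prf.ax1.impE (Prf.refl _))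

/-- The formula (∀x,y)(Sx = Sy → □(x = y)) is provable
in CC″. -/
theorem succ_injective :
    Prf [] (.all (.all (.imp (.eq (.succ (.var 1)) (.succ (.var 0)))
      (.box (.eq (.var 1) (.var 0)))))) := by
  refine Prf.allI (Prf.allI (Prf.impI ((mem_succ_iff _ 1 0).andE1.impE ?_)))
  exact Prf.eqSubst (A := .mem (.var 2) (.var 0)) (.succ (.var 1)) (.succ (.var 0))
    (Prf.hyp List.mem_cons_self) (self_mem_succ _ 1)
end CC2
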